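/- Let F satisfy Condition A, and let a and b denote the left and right endpoints of J(F) = {x ∈ ℝ : 0 < F(x) < 1}. Then θ ↦ L(θ; F) is non-decreasing on (−∞, a] (when a > −∞) and non-increasing on [b, ∞) (when b < ∞); consequently every maximizer θ*(F) of θ ↦ L(θ; F) lies in the closure of J(F). -/

import Mathlib

open MeasureTheory Filter Set
open scoped ENNReal NNReal

noncomputable section

/-- `exp` of an extended real number, valued in `ℝ≥0∞`. -/
def expE (y : EReal) : ℝ≥0∞ :=
  if y = ⊥ then 0 else if y = ⊤ then ⊤ else ENNReal.ofReal (Real.exp y.toReal)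

/-- Truncation of an extended real number to `ℝ≥0∞` (negative values go to `0`). -/
def toENN (y : EReal) : ℝ≥0∞ :=
  if y = ⊤ then ⊤ else ENNReal.ofReal y.toReal

/-- Signed (upper-minus-lower) integral of an `EReal`-valued function against a measure. -/
def eIntegral (μ : Measure ℝ) (ψ : ℝ → EReal) : EReal :=
  ((∫⁻ x, toENN (ψ x) ∂μ : ℝ≥0∞) : EReal) - ((∫⁻ x, toENN (-(ψ x)) ∂μ : ℝ≥0∞) : EReal)

/-- Concavity for `EReal`-valued functions on `ℝ`. -/
def EConcave (ψ : ℝ → EReal) : Prop :=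
  ∀ x y : ℝ, ∀ t : ℝ, 0 ≤ t → t ≤ 1 →
    ((t : EReal) * ψ x + (((1 - t) : ℝ) : EReal) * ψ y) ≤ ψ (t * x + (1 - t) * y)

/-- The class `SC₀` of proper, closed (upper semicontinuous), concave functions
`ℝ → [−∞, ∞)` that are symmetric about `0`. -/
def memSC0 (ψ : ℝ → EReal) : Prop :=
  (∀ x, ψ x < ⊤) ∧ (∃ x, ψ x ≠ ⊥) ∧ UpperSemicontinuous ψ ∧ EConcave ψ ∧ ∀ x, ψ (-x) = ψ x

/-- The criterion function `Ψ(θ, ψ, F) = ∫ ψ(x − θ) dμ(x) − ∫ e^{ψ(x)} dx`. -/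
def Psi (θ : ℝ) (ψ : ℝ → EReal) (μ : Measure ℝ) : EReal :=
  eIntegral μ (fun x => ψ (x - θ)) - ((∫⁻ x, expE (ψ x) : ℝ≥0∞) : EReal)

/-- `L(θ; F) = sup_{ψ ∈ SC₀} Ψ(θ, ψ, F)`. -/
def Ltheta (θ : ℝ) (μ : Measure ℝ) : EReal :=
  ⨆ ψ ∈ {ψ : ℝ → EReal | memSC0 ψ}, Psi θ ψ μ

/-- `L(F) = sup_{θ ∈ ℝ, ψ ∈ SC₀} Ψ(θ, ψ, F)`. -/
def Lsup (μ : Measure ℝ) : EReal := ⨆ θ : ℝ, Ltheta θ μ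

/-- Condition A: `μ` is a probability measure that is not a point mass,
with a finite first absolute moment. -/
def CondA (μ : Measure ℝ) : Prop :=
  IsProbabilityMeasure μ ∧ (∀ x : ℝ, μ ≠ Measure.dirac x) ∧
    (∫⁻ x, ENNReal.ofReal |x| ∂μ) < ⊤

/-- The empirical measure of the data `X₁, …, Xₙ`. -/
def empMeas {n : ℕ} (X : Fin n → ℝ) : Measure ℝ :=
  ((n : ℝ≥0∞))⁻¹ • ∑ i : Fin n, Measure.dirac (X i)

/-- The empirical measure of the first `n` entries of a sequence. -/
def empSeq (X : ℕ → ℝ) (n : ℕ) : Measure ℝ :=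
  ((n : ℝ≥0∞))⁻¹ • ∑ i ∈ Finset.range n, Measure.dirac (X i)

/-- The density `e^ψ` as a real-valued function. -/
def gReal (ψ : ℝ → EReal) (x : ℝ) : ℝ := (expE (ψ x)).toReal

/-- A knot of a concave function `ψ`: a point where the left and right derivatives
differ, or a boundary point of `dom ψ = {ψ > −∞}`. -/
def IsKnot (ψ : ℝ → EReal) (x : ℝ) : Prop :=
  x ∈ frontier {y : ℝ | ψ y ≠ ⊥} ∨
    derivWithin (fun y => (ψ y).toReal) (Set.Iio x) x ≠
      derivWithin (fun y => (ψ y).toReal) (Set.Ioi x) x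

/-- The class `𝒞` of proper closed concave functions `ℝ → [−∞, ∞)`. -/
def memC (φ : ℝ → EReal) : Prop :=
  (∀ x, φ x < ⊤) ∧ (∃ x, φ x ≠ ⊥) ∧ UpperSemicontinuous φ ∧ EConcave φ

/-- The criterion function `ω(φ, F) = ∫ φ dμ − ∫ e^{φ(x)} dx`. -/
def omegaF (φ : ℝ → EReal) (μ : Measure ℝ) : EReal :=
  eIntegral μ φ - ((∫⁻ x, expE (φ x) : ℝ≥0∞) : EReal)

/-- `(θ, ψ)` maximizes `Ψ(·, ·, μ)` over `ℝ × SC₀`. -/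
def IsMaximizer (θ : ℝ) (ψ : ℝ → EReal) (μ : Measure ℝ) : Prop :=
  memSC0 ψ ∧ ∀ (θ' : ℝ) (ψ' : ℝ → EReal), memSC0 ψ' → Psi θ' ψ' μ ≤ Psi θ ψ μ

/-- Condition B: the `θ`-component of a maximizer of `Ψ(·, ·, μ)` is unique. -/
def CondB (μ : Measure ℝ) : Prop :=
  ∀ (θ₁ θ₂ : ℝ) (ψ₁ ψ₂ : ℝ → EReal),
    IsMaximizer θ₁ ψ₁ μ → IsMaximizer θ₂ ψ₂ μ → θ₁ = θ₂

/-- `J(F) = {x : 0 < F(x) < 1}`. -/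
def Jset (μ : Measure ℝ) : Set ℝ := {x : ℝ | 0 < μ (Set.Iic x) ∧ μ (Set.Iic x) < 1}

/-- The Hellinger distance between two densities. -/
def Hdist (f g : ℝ → ℝ) : ℝ :=
  Real.sqrt ((1 / 2) * ∫ x, (Real.sqrt (f x) - Real.sqrt (g x)) ^ 2)

/-- Finite Fisher information for location: `g` is a.e. differentiable with
square-integrable score. -/
def FiniteFisher (g : ℝ → ℝ) : Prop :=
  ∃ D : ℝ → ℝ, (∀ᵐ x : ℝ, HasDerivAt g (D x) x) ∧
    (∫⁻ x, ENNReal.ofReal ((D x) ^ 2 / g x)) < ⊤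

/-- The symmetrization `μ^{sym}_θ = (μ + R_θ#μ)/2` of a measure about `θ`. -/
def symMeas (θ : ℝ) (μ : Measure ℝ) : Measure ℝ :=
  ((2 : ℝ≥0∞))⁻¹ • (μ + Measure.map (fun x => 2 * θ - x) μ)

end

/-!
If `μ` lives on one side of `θ`, at distance at least `d > 0`, let `θ'` be the point at distance
`d` from `θ` towards the mass, so that `|x - θ'| + d = |x - θ|` almost surely. Excising `[-d, d]`
from an even `ψ` and gluing the halves then gives a `ψ'` with `ψ' (x - θ') = ψ (x - θ)` almost
surely, whose penalty `∫ e^ψ'` is smaller by `∫_{-d}^{d} e^ψ ≥ 2 d e^{ψ d}`. As `ψ` is radially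
non-increasing, `Ψ(θ, ψ) ≤ ψ d`, so each value `p` of `Ψ(θ, ·)` satisfies
`p + 2 d e^p ≤ L(θ')`. The gain is bounded away from `0` along a maximizing sequence, whence
`L(θ) < L(θ')` as soon as `L(θ)` is finite; it is finite because the Laplace log-density `-|x|`
has a finite criterion, and `s - 2 d e^s` is bounded above.
-/

section Excision

/-- The function obtained from an even function `f` by cutting out `[-d, d]` and gluing the two
remaining halves together at `0`, so that the value at `± y` is that of `f` at `± (y + d)`. -/
def exciseCenter {α : Type*} (f : ℝ → α) (d : ℝ) (y : ℝ) : α := f (|y| + d)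

lemma lintegral_eq_two_mul_setLIntegral_Ioi {f : ℝ → ℝ≥0∞} (hf : Function.Even f) :
    ∫⁻ y, f y = 2 * ∫⁻ y in Ioi 0, f y := by
  have h_neg : ∫⁻ y in Iic 0, f y = ∫⁻ y in Ioi 0, f y := by
    calc ∫⁻ y in Iic 0, f y = ∫⁻ y in Iic 0, f (-y) := by simp only [hf _]
      _ = ∫⁻ y in Neg.neg ⁻¹' Ici 0, f (-y) := by simp
      _ = ∫⁻ y in Ici 0, f y :=
        (Measure.measurePreserving_neg volume).setLIntegral_comp_preimage_emb
          (MeasurableEquiv.neg ℝ).measurableEmbedding f _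
      _ = ∫⁻ y in Ioi 0, f y := setLIntegral_congr Ioi_ae_eq_Ici.symm
  rw [← lintegral_add_compl f (measurableSet_Iic (a := 0)), compl_Iic, h_neg, two_mul]

lemma lintegral_exciseCenter_add {f : ℝ → ℝ≥0∞} (hf : Function.Even f) {d : ℝ} (hd : 0 ≤ d) :
    (∫⁻ y, exciseCenter f d y) + 2 * ∫⁻ y in Ioc 0 d, f y = ∫⁻ y, f y := by
  have h_even : Function.Even (exciseCenter f d) := fun y => by simp [exciseCenter]
  have h_shift : ∫⁻ y in Ioi 0, exciseCenter f d y = ∫⁻ y in Ioi d, f y := by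
    calc ∫⁻ y in Ioi 0, exciseCenter f d y = ∫⁻ y in Ioi 0, f (y + d) :=
          setLIntegral_congr_fun measurableSet_Ioi fun y hy => by
            simp only [exciseCenter, abs_of_pos (mem_Ioi.1 hy)]
      _ = ∫⁻ y in (· + d) ⁻¹' Ioi d, f (y + d) := by simp
      _ = ∫⁻ y in Ioi d, f y :=
        (measurePreserving_add_right volume d).setLIntegral_comp_preimage_emb
          (measurableEmbedding_addRight d) f _
  rw [lintegral_eq_two_mul_setLIntegral_Ioi h_even, h_shift,
    lintegral_eq_two_mul_setLIntegral_Ioi hf, ← Ioc_union_Ioi_eq_Ioi hd,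
    lintegral_union measurableSet_Ioi (Ioc_disjoint_Ioi le_rfl), ← mul_add, add_comm]

end Excision

section Concave

lemma EConcave.le_of_abs_le {ψ : ℝ → EReal} (hc : EConcave ψ) (he : Function.Even ψ) {x y : ℝ}
    (hxy : |x| ≤ |y|) : ψ y ≤ ψ x := by
  rcases eq_or_ne y 0 with rfl | hy
  · rw [abs_nonpos_iff.1 (hxy.trans_eq abs_zero)]
  obtain ⟨h₁, h₂⟩ : -1 ≤ x / y ∧ x / y ≤ 1 :=
    abs_le.1 (by rw [abs_div]; exact div_le_one_of_le₀ hxy (abs_nonneg y))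
  set t := (1 + x / y) / 2 with ht
  have ht₀ : 0 ≤ t := by linarith
  have ht₁ : 0 ≤ 1 - t := by linarith
  have hx : t * y + (1 - t) * -y = x := by rw [ht]; field_simp; ring
  calc ψ y = ((t : EReal) + ((1 - t : ℝ) : EReal)) * ψ y := by
        rw [← EReal.coe_add, add_sub_cancel, EReal.coe_one, one_mul]
    _ = t * ψ y + ((1 - t : ℝ) : EReal) * ψ (-y) := by
        rw [he y, EReal.right_distrib_of_nonneg (by exact_mod_cast ht₀) (by exact_mod_cast ht₁)]
    _ ≤ ψ x := hx ▸ hc y (-y) t ht₀ (by linarith)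

lemma econcave_coe {f : ℝ → ℝ} (hf : ConcaveOn ℝ univ f) : EConcave fun x => (f x : EReal) :=
  fun x y t ht₀ ht₁ => by
    beta_reduce
    exact_mod_cast hf.2 (mem_univ x) (mem_univ y) ht₀ (sub_nonneg.2 ht₁) (add_sub_cancel t 1)

lemma memSC0.le_of_abs_le {ψ : ℝ → EReal} (hψ : memSC0 ψ) {x y : ℝ} (hxy : |x| ≤ |y|) :
    ψ y ≤ ψ x :=
  hψ.2.2.2.1.le_of_abs_le hψ.2.2.2.2 hxy

lemma memSC0_exciseCenter {ψ : ℝ → EReal} (hψ : memSC0 ψ) {d : ℝ} (hd : 0 ≤ d) (hψd : ψ d ≠ ⊥) :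
    memSC0 (exciseCenter ψ d) := by
  refine ⟨fun y => hψ.1 _, ⟨0, by simpa [exciseCenter] using hψd⟩,
    hψ.2.2.1.comp (by fun_prop), fun x y t ht₀ ht₁ => ?_, fun y => by simp [exciseCenter]⟩
  have h_abs : |t * x + (1 - t) * y| ≤ t * |x| + (1 - t) * |y| := by
    simpa using (convexOn_norm convex_univ).2 (mem_univ x) (mem_univ y) ht₀ (sub_nonneg.2 ht₁)
      (add_sub_cancel t 1)
  refine (hψ.2.2.2.1 (|x| + d) (|y| + d) t ht₀ ht₁).trans (hψ.le_of_abs_le ?_)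
  rw [abs_of_nonneg (by positivity)]
  exact le_abs.2 (Or.inl (by linarith))

lemma memSC0_neg_abs : memSC0 fun x => ((-|x| : ℝ) : EReal) :=
  ⟨fun _ => EReal.coe_lt_top _, ⟨0, EReal.coe_ne_bot _⟩,
    (continuous_coe_real_ereal.comp (by fun_prop)).upperSemicontinuous,
    econcave_coe (convexOn_norm convex_univ).neg, fun x => by simp only [abs_neg]⟩

end Concave

section ExtendedReals

lemma toENN_mono : Monotone toENN := fun _ _ => EReal.toENNReal_le_toENNReal

lemma expE_eq_exp (y : EReal) : expE y = y.exp := by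
  induction y <;> simp [expE]

lemma expE_mono : Monotone expE := fun x y hxy => by
  simpa only [expE_eq_exp] using EReal.exp_monotone hxy

lemma ereal_sub_coe_add_add_coe_le (a : EReal) (b c : ℝ≥0∞) : a - ↑(b + c) + c ≤ a - b := by
  refine EReal.add_le_of_le_sub (le_of_eq ?_)
  rw [EReal.coe_ennreal_add, sub_eq_add_neg, EReal.neg_add (by simp) (by simp), sub_eq_add_neg,
    sub_eq_add_neg, sub_eq_add_neg, add_assoc]

lemma sub_mul_expE_le {c : ℝ} (hc : 0 < c) (s : EReal) :
    s - ↑(ENNReal.ofReal c * expE s) ≤ ((-1 - Real.log c : ℝ) : EReal) := by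
  induction s with
  | bot => simp
  | top => simp [expE_eq_exp, ENNReal.mul_top, hc]
  | coe s =>
    have h_exp : s + Real.log c + 1 ≤ c * Real.exp s := by
      simpa only [Real.exp_add, Real.exp_log hc, mul_comm] using
        Real.add_one_le_exp (s + Real.log c)
    rw [expE_eq_exp, EReal.exp_coe, ← ENNReal.ofReal_mul hc.le, EReal.coe_ennreal_ofReal,
      max_eq_left (by positivity), ← EReal.coe_sub, EReal.coe_le_coe_iff]
    linarith

end ExtendedReals

section Integral

variable {μ : Measure ℝ} {f g : ℝ → EReal}

lemma eIntegral_mono_ae (h : f ≤ᵐ[μ] g) : eIntegral μ f ≤ eIntegral μ g := by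
  refine EReal.sub_le_sub (EReal.coe_ennreal_le_coe_ennreal_iff.2 ?_)
    (EReal.coe_ennreal_le_coe_ennreal_iff.2 ?_)
  · exact lintegral_mono_ae (h.mono fun x hx => toENN_mono hx)
  · exact lintegral_mono_ae (h.mono fun x hx => toENN_mono (EReal.neg_le_neg_iff.2 hx))

lemma eIntegral_coe {f : ℝ → ℝ} (hf : Integrable f μ) :
    eIntegral μ (fun x => (f x : EReal)) = ((∫ x, f x ∂μ : ℝ) : EReal) := by
  have h_pos : ∫⁻ x, ENNReal.ofReal (f x) ∂μ ≠ ⊤ := hf.lintegral_lt_top.ne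
  have h_neg : ∫⁻ x, ENNReal.ofReal (-f x) ∂μ ≠ ⊤ := hf.neg.lintegral_lt_top.ne
  rw [integral_eq_lintegral_pos_part_sub_lintegral_neg_part hf, EReal.coe_sub,
    EReal.coe_ennreal_toReal h_pos, EReal.coe_ennreal_toReal h_neg]
  rfl

lemma eIntegral_const [IsProbabilityMeasure μ] (c : EReal) : eIntegral μ (fun _ => c) = c := by
  induction c with
  | bot => simp [eIntegral, toENN]
  | top => simp [eIntegral, toENN]
  | coe c => simpa using eIntegral_coe (μ := μ) (integrable_const c)

lemma eIntegral_le_of_ae_le [IsProbabilityMeasure μ] {c : EReal} (h : ∀ᵐ x ∂μ, f x ≤ c) :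
    eIntegral μ f ≤ c :=
  (eIntegral_mono_ae h).trans_eq (eIntegral_const c)

lemma integrable_exp_neg_abs : Integrable fun x : ℝ => Real.exp (-|x|) := by
  refine .of_integral_ne_zero ?_
  rw [integral_comp_abs (f := fun x => Real.exp (-x)), integral_exp_neg_Ioi_zero]
  norm_num

end Integral

section Support

lemma eq_dirac_of_ae_eq {X : Type*} [MeasurableSpace X] {μ : Measure X} [IsProbabilityMeasure μ]
    {a : X} (h : ∀ᵐ x ∂μ, x = a) : μ = Measure.dirac a := by
  simpa using (ProbabilityTheory.hasLaw_dirac_of_ae_eq (X := id) h).map_eq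

lemma nontrivial_support {X : Type*} [TopologicalSpace X] [HereditarilyLindelofSpace X]
    [MeasurableSpace X] {μ : Measure X} [IsProbabilityMeasure μ] (h : ∀ x, μ ≠ Measure.dirac x) :
    μ.support.Nontrivial := by
  by_contra hsub
  obtain ⟨a, ha⟩ := Measure.nonempty_support (IsProbabilityMeasure.ne_zero μ)
  refine h a (eq_dirac_of_ae_eq ?_)
  filter_upwards [Measure.support_mem_ae (μ := μ)] with x hx
  exact not_nontrivial_iff.1 hsub hx ha

variable {μ : Measure ℝ}

lemma ordConnected_Jset : (Jset μ).OrdConnected :=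
  ⟨fun _ hx _ hy _ hz => ⟨hx.1.trans_le (measure_mono (Iic_subset_Iic.2 hz.1)),
    (measure_mono (Iic_subset_Iic.2 hz.2)).trans_lt hy.2⟩⟩

lemma Ioo_subset_Jset [IsProbabilityMeasure μ] {x y : ℝ} (hx : x ∈ μ.support)
    (hy : y ∈ μ.support) : Ioo x y ⊆ Jset μ := by
  intro z hz
  rw [Measure.mem_support_iff_forall] at hx hy
  refine ⟨hx _ (Iic_mem_nhds hz.1), prob_le_one.lt_of_ne fun h_one => ?_⟩
  rw [← prob_compl_eq_zero_iff measurableSet_Iic, compl_Iic] at h_one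
  exact (hy _ (Ioi_mem_nhds hz.2)).ne' h_one

lemma support_subset_closure_Jset [IsProbabilityMeasure μ] (h : μ.support.Nontrivial) :
    μ.support ⊆ closure (Jset μ) := by
  intro x hx
  obtain ⟨y, hy, hyx⟩ := h.exists_ne x
  rcases hyx.lt_or_gt with hlt | hlt
  · exact closure_mono (Ioo_subset_Jset hy hx) (by simp [closure_Ioo hlt.ne, hlt.le])
  · exact closure_mono (Ioo_subset_Jset hx hy) (by simp [closure_Ioo hlt.ne, hlt.le])

lemma CondA.ae_mem_closure_Jset (hA : CondA μ) : ∀ᵐ x ∂μ, x ∈ closure (Jset μ) := by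
  have := hA.1
  exact mem_of_superset Measure.support_mem_ae
    (support_subset_closure_Jset (nontrivial_support hA.2.1))

lemma CondA.ae_le_of_forall_Jset (hA : CondA μ) {c : ℝ} (h : ∀ x ∈ Jset μ, c ≤ x) :
    ∀ᵐ x ∂μ, c ≤ x :=
  hA.ae_mem_closure_Jset.mono fun _ hx => closure_minimal h isClosed_Ici hx

lemma CondA.ae_ge_of_forall_Jset (hA : CondA μ) {c : ℝ} (h : ∀ x ∈ Jset μ, x ≤ c) :
    ∀ᵐ x ∂μ, x ≤ c :=
  hA.ae_mem_closure_Jset.mono fun _ hx => closure_minimal h isClosed_Iic hx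

lemma CondA.integrable_id (hA : CondA μ) : Integrable (fun x => x) μ :=
  ⟨aestronglyMeasurable_id, by simpa [hasFiniteIntegral_iff_norm] using hA.2.2⟩

lemma exists_pos_forall_add_le_or_forall_le_sub {s : Set ℝ} (hs : s.OrdConnected) {θ : ℝ}
    (hθ : θ ∉ closure s) : ∃ d > 0, (∀ x ∈ s, θ + d ≤ x) ∨ ∀ x ∈ s, x ≤ θ - d := by
  obtain ⟨d, hd, h_dist⟩ : ∃ d > 0, ∀ x ∈ s, d ≤ |θ - x| := by
    simpa [Metric.mem_closure_iff, Real.dist_eq] using hθ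
  refine ⟨d, hd, ?_⟩
  by_cases h_left : ∃ x₀ ∈ s, x₀ ≤ θ
  · obtain ⟨x₀, hx₀, hx₀θ⟩ := h_left
    refine Or.inr fun x hx => ?_
    have hxθ : x ≤ θ := by
      by_contra! hθx
      exact hθ (subset_closure (hs.out hx₀ hx ⟨hx₀θ, hθx.le⟩))
    have := h_dist x hx
    rw [abs_of_nonneg (by linarith)] at this
    linarith
  · push Not at h_left
    refine Or.inl fun x hx => ?_
    have := h_dist x hx
    rw [abs_of_neg (by linarith [h_left x hx])] at this
    linarith

end Support

section Criterion

variable {μ : Measure ℝ} {ψ : ℝ → EReal} {θ θ' d : ℝ}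

lemma ae_le_abs_sub_of_ae_abs_sub_add_eq (h : ∀ᵐ x ∂μ, |x - θ'| + d = |x - θ|) :
    ∀ᵐ x ∂μ, d ≤ |x - θ| :=
  h.mono fun x hx => by linarith [abs_nonneg (x - θ')]

lemma memSC0.Psi_le_Ltheta (hψ : memSC0 ψ) (θ : ℝ) (μ : Measure ℝ) : Psi θ ψ μ ≤ Ltheta θ μ :=
  le_iSup₂ (f := fun ψ (_ : ψ ∈ {ψ | memSC0 ψ}) => Psi θ ψ μ) ψ hψ

lemma Ltheta_le_Ltheta_of_ae_abs_sub_le (h : ∀ᵐ x ∂μ, |x - θ'| ≤ |x - θ|) :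
    Ltheta θ μ ≤ Ltheta θ' μ :=
  iSup₂_mono fun _ hψ =>
    EReal.sub_le_sub (eIntegral_mono_ae (h.mono fun _ hx => memSC0.le_of_abs_le hψ hx)) le_rfl

lemma exists_memSC0_bot_lt_Psi [IsFiniteMeasure μ] (hμ : Integrable (fun x => x) μ) (θ : ℝ) :
    ∃ ψ, memSC0 ψ ∧ ⊥ < Psi θ ψ μ := by
  refine ⟨_, memSC0_neg_abs, ?_⟩
  have h_fit : Integrable (fun x => -|x - θ|) μ := (hμ.sub (integrable_const θ)).abs.neg
  have h_penalty : ∫⁻ x : ℝ, expE ((-|x| : ℝ) : EReal) ≠ ⊤ := by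
    simpa only [expE_eq_exp, EReal.exp_coe] using integrable_exp_neg_abs.lintegral_lt_top.ne
  rw [Psi, eIntegral_coe h_fit]
  lift (∫⁻ x : ℝ, expE ((-|x| : ℝ) : EReal)) to ℝ≥0 using h_penalty with I
  exact EReal.bot_lt_coe ((∫ x, -|x - θ| ∂μ) - I)

lemma Psi_add_le_Psi_exciseCenter (he : Function.Even ψ) (hd : 0 ≤ d)
    (h : ∀ᵐ x ∂μ, |x - θ'| + d = |x - θ|) :
    Psi θ ψ μ + ↑(2 * ∫⁻ y in Ioc 0 d, expE (ψ y)) ≤ Psi θ' (exciseCenter ψ d) μ := by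
  have h_fit : eIntegral μ (fun x => ψ (x - θ)) ≤
      eIntegral μ (fun x => exciseCenter ψ d (x - θ')) := by
    refine eIntegral_mono_ae (h.mono fun x hx => le_of_eq ?_)
    simp only [exciseCenter, hx]
    rcases abs_choice (x - θ) with h_abs | h_abs <;> rw [h_abs]
    exact (he _).symm
  have h_penalty := lintegral_exciseCenter_add (f := fun y => expE (ψ y))
    (fun y => congrArg expE (he y)) hd
  rw [Psi, ← h_penalty]
  exact (ereal_sub_coe_add_add_coe_le _ _ _).trans (EReal.sub_le_sub h_fit le_rfl)

lemma memSC0.ofReal_mul_expE_le (hψ : memSC0 ψ) (hd : 0 ≤ d) :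
    ENNReal.ofReal (2 * d) * expE (ψ d) ≤ 2 * ∫⁻ y in Ioc 0 d, expE (ψ y) := by
  calc ENNReal.ofReal (2 * d) * expE (ψ d) = 2 * ∫⁻ _ in Ioc 0 d, expE (ψ d) := by
        rw [setLIntegral_const, Real.volume_Ioc, ENNReal.ofReal_mul zero_le_two, sub_zero,
          ENNReal.ofReal_ofNat]
        ring
    _ ≤ 2 * ∫⁻ y in Ioc 0 d, expE (ψ y) := by
        gcongr 2 * ?_
        refine setLIntegral_mono' measurableSet_Ioc fun y hy => expE_mono (hψ.le_of_abs_le ?_)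
        rw [abs_of_pos hy.1, abs_of_nonneg hd]
        exact hy.2

variable [IsProbabilityMeasure μ]

lemma memSC0.Psi_le_sub (hψ : memSC0 ψ) (hd : 0 ≤ d) (h : ∀ᵐ x ∂μ, d ≤ |x - θ|) :
    Psi θ ψ μ ≤ ψ d - ↑(ENNReal.ofReal (2 * d) * expE (ψ d)) := by
  refine EReal.sub_le_sub (eIntegral_le_of_ae_le (h.mono fun x hx => hψ.le_of_abs_le ?_))
    (EReal.coe_ennreal_le_coe_ennreal_iff.2 ?_)
  · rwa [abs_of_nonneg hd]
  · calc ENNReal.ofReal (2 * d) * expE (ψ d) ≤ 2 * ∫⁻ y in Ioc 0 d, expE (ψ y) :=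
          hψ.ofReal_mul_expE_le hd
      _ ≤ (∫⁻ y, exciseCenter (fun y => expE (ψ y)) d y) + 2 * ∫⁻ y in Ioc 0 d, expE (ψ y) :=
          le_add_self
      _ = ∫⁻ y, expE (ψ y) :=
          lintegral_exciseCenter_add (fun y => congrArg expE (hψ.2.2.2.2 y)) hd

lemma Ltheta_lt_top (hd : 0 < d) (h : ∀ᵐ x ∂μ, d ≤ |x - θ|) : Ltheta θ μ < ⊤ :=
  calc Ltheta θ μ ≤ ((-1 - Real.log (2 * d) : ℝ) : EReal) :=
        iSup₂_le fun ψ hψ => (memSC0.Psi_le_sub hψ hd.le h).trans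
          (sub_mul_expE_le (by positivity) (ψ d))
    _ < ⊤ := EReal.coe_lt_top _

lemma memSC0.Psi_add_le_Ltheta (hψ : memSC0 ψ) (hd : 0 ≤ d)
    (h : ∀ᵐ x ∂μ, |x - θ'| + d = |x - θ|) :
    Psi θ ψ μ + ↑(ENNReal.ofReal (2 * d) * expE (Psi θ ψ μ)) ≤ Ltheta θ' μ := by
  have h_le : Psi θ ψ μ ≤ ψ d :=
    (hψ.Psi_le_sub hd (ae_le_abs_sub_of_ae_abs_sub_add_eq h)).trans
      (EReal.sub_le_of_le_add (le_add_of_nonneg_right (EReal.coe_ennreal_nonneg _)))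
  rcases eq_or_ne (ψ d) ⊥ with hψd | hψd
  · rw [le_bot_iff.1 (h_le.trans_eq hψd), EReal.bot_add]
    exact bot_le
  calc Psi θ ψ μ + ↑(ENNReal.ofReal (2 * d) * expE (Psi θ ψ μ))
      ≤ Psi θ ψ μ + ↑(ENNReal.ofReal (2 * d) * expE (ψ d)) := by
        gcongr
        exact EReal.coe_ennreal_le_coe_ennreal_iff.2 (mul_le_mul_right (expE_mono h_le) _)
    _ ≤ Psi θ ψ μ + ↑(2 * ∫⁻ y in Ioc 0 d, expE (ψ y)) := by
        gcongr
        exact EReal.coe_ennreal_le_coe_ennreal_iff.2 (hψ.ofReal_mul_expE_le hd)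
    _ ≤ Psi θ' (exciseCenter ψ d) μ := Psi_add_le_Psi_exciseCenter hψ.2.2.2.2 hd h
    _ ≤ Ltheta θ' μ := (memSC0_exciseCenter hψ hd hψd).Psi_le_Ltheta θ' μ

lemma memSC0.Ltheta_add_le_Ltheta (hψ : memSC0 ψ) (hd : 0 < d)
    (h : ∀ᵐ x ∂μ, |x - θ'| + d = |x - θ|) :
    Ltheta θ μ + ↑(ENNReal.ofReal (2 * d) * expE (Psi θ ψ μ)) ≤ Ltheta θ' μ := by
  have h_gain : ENNReal.ofReal (2 * d) * expE (Psi θ ψ μ) ≠ ⊤ := by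
    have h_lt_top := (hψ.Psi_le_Ltheta θ μ).trans_lt
      (Ltheta_lt_top hd (ae_le_abs_sub_of_ae_abs_sub_add_eq h))
    rw [expE_eq_exp]
    exact ENNReal.mul_ne_top ENNReal.ofReal_ne_top (EReal.exp_lt_top_iff.2 h_lt_top).ne
  have h_sub {a : EReal} : a ≤ Ltheta θ' μ - ↑(ENNReal.ofReal (2 * d) * expE (Psi θ ψ μ)) ↔
      a + ↑(ENNReal.ofReal (2 * d) * expE (Psi θ ψ μ)) ≤ Ltheta θ' μ :=
    EReal.le_sub_iff_add_le (Or.inl (EReal.coe_ennreal_ne_bot _))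
      (Or.inl (mt EReal.coe_ennreal_eq_top_iff.1 h_gain))
  rw [← h_sub]
  refine iSup₂_le fun φ hφ => ?_
  rcases le_total (Psi θ φ μ) (Psi θ ψ μ) with h_le | h_le
  · exact h_le.trans (h_sub.2 (hψ.Psi_add_le_Ltheta hd.le h))
  · refine h_sub.2 (le_trans ?_ (memSC0.Psi_add_le_Ltheta hφ hd.le h))
    gcongr
    exact EReal.coe_ennreal_le_coe_ennreal_iff.2 (mul_le_mul_right (expE_mono h_le) _)

lemma Ltheta_lt_Ltheta_of_ae_abs_sub_add_eq (hμ : Integrable (fun x => x) μ) (hd : 0 < d)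
    (h : ∀ᵐ x ∂μ, |x - θ'| + d = |x - θ|) : Ltheta θ μ < Ltheta θ' μ := by
  obtain ⟨ψ, hψ, h_bot⟩ := exists_memSC0_bot_lt_Psi hμ θ
  have h_gain : 0 < ENNReal.ofReal (2 * d) * expE (Psi θ ψ μ) := by
    rw [expE_eq_exp]
    exact ENNReal.mul_pos (by simpa using hd) (EReal.zero_lt_exp_iff.2 h_bot).ne'
  refine lt_of_lt_of_le ?_ (hψ.Ltheta_add_le_Ltheta hd h)
  lift Ltheta θ μ to ℝ using ⟨(Ltheta_lt_top hd (ae_le_abs_sub_of_ae_abs_sub_add_eq h)).ne,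
    (h_bot.trans_le (hψ.Psi_le_Ltheta θ μ)).ne'⟩ with l
  simpa using EReal.add_lt_add_left_coe (EReal.coe_ennreal_pos.2 h_gain) l

end Criterion

/-- Under Condition A, `θ ↦ L(θ; F)` is non-decreasing to the left of
`J(F) = {0 < F < 1}` and non-increasing to the right of `J(F)`; consequently every
maximizer of `θ ↦ L(θ; F)` lies in the closure of `J(F)`. -/
theorem statement12 (μ : Measure ℝ) (hA : CondA μ) :
    (∀ θ₁ θ₂ : ℝ, θ₁ ≤ θ₂ → (∀ x ∈ Jset μ, θ₂ ≤ x) → Ltheta θ₁ μ ≤ Ltheta θ₂ μ) ∧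
      (∀ θ₁ θ₂ : ℝ, θ₁ ≤ θ₂ → (∀ x ∈ Jset μ, x ≤ θ₁) → Ltheta θ₂ μ ≤ Ltheta θ₁ μ) ∧
      ∀ θstar : ℝ, (∀ θ' : ℝ, Ltheta θ' μ ≤ Ltheta θstar μ) →
        θstar ∈ closure (Jset μ) := by
  refine ⟨fun θ₁ θ₂ h₁₂ hJ => Ltheta_le_Ltheta_of_ae_abs_sub_le ?_,
    fun θ₁ θ₂ h₁₂ hJ => Ltheta_le_Ltheta_of_ae_abs_sub_le ?_, fun θ hmax => ?_⟩
  · filter_upwards [hA.ae_le_of_forall_Jset hJ] with x hx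
    rw [abs_of_nonneg (by linarith), abs_of_nonneg (by linarith)]
    linarith
  · filter_upwards [hA.ae_ge_of_forall_Jset hJ] with x hx
    rw [abs_of_nonpos (by linarith), abs_of_nonpos (by linarith)]
    linarith
  · by_contra hθ
    have := hA.1
    obtain ⟨d, hd, hJ | hJ⟩ := exists_pos_forall_add_le_or_forall_le_sub ordConnected_Jset hθ
    · refine (Ltheta_lt_Ltheta_of_ae_abs_sub_add_eq hA.integrable_id hd ?_).not_ge (hmax (θ + d))
      filter_upwards [hA.ae_le_of_forall_Jset hJ] with x hx
      rw [abs_of_nonneg (by linarith), abs_of_nonneg (by linarith)]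
      ring
    · refine (Ltheta_lt_Ltheta_of_ae_abs_sub_add_eq hA.integrable_id hd ?_).not_ge (hmax (θ - d))
      filter_upwards [hA.ae_ge_of_forall_Jset hJ] with x hx
      rw [abs_of_nonpos (by linarith), abs_of_nonpos (by linarith)]
      ring
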